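/- In the SVM dual setup, let X ∈ ℝ^{p×d} have rank ρ and compact singular value decomposition X = UΣV^T, let R ∈ ℝ^{d×r} be any matrix, and set E = I_ρ − V^T R R^T V; assume ‖E‖₂ < 1. Suppose α* ∈ K maximizes f over K and α̃* ∈ K maximizes f̃ over K. Then f(α*) ≥ f̃(α̃*) − (1/2) · (‖E‖₂ / (1 − ‖E‖₂)) · ‖R^T X^T Y α̃*‖₂². -/

import Mathlib

open Matrix

/-- Euclidean norm of a vector in ℝ^n. -/
noncomputable def euclNorm {n : ℕ} (x : Fin n → ℝ) : ℝ := Real.sqrt (∑ i, x i ^ 2)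

/-- Spectral norm (ℓ₂ operator norm) of a real matrix: the supremum of `‖A x‖₂`
over unit vectors `x`. -/
noncomputable def specNorm {m n : ℕ} (A : Matrix (Fin m) (Fin n) ℝ) : ℝ :=
  sSup {c : ℝ | ∃ x : Fin n → ℝ, euclNorm x = 1 ∧ c = euclNorm (A.mulVec x)}

/-- The SVM dual feasible set `K = {α : 0 ≤ αᵢ ≤ C, Σᵢ yᵢαᵢ = 0}`. -/
def svmFeasible {p : ℕ} (y : Fin p → ℝ) (C : ℝ) (α : Fin p → ℝ) : Prop :=
  (∀ i, 0 ≤ α i ∧ α i ≤ C) ∧ ∑ i, y i * α i = 0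

/-- The SVM dual objective `f(α) = Σᵢ αᵢ − (1/2)‖XᵀYα‖₂²`, where `Y = diag(y)`. -/
noncomputable def svmDualObj {p d : ℕ} (X : Matrix (Fin p) (Fin d) ℝ) (y : Fin p → ℝ)
    (α : Fin p → ℝ) : ℝ :=
  ∑ i, α i - (1 / 2) * euclNorm (Xᵀ.mulVec ((Matrix.diagonal y).mulVec α)) ^ 2

/-- The reduced SVM dual objective `f̃(α) = Σᵢ αᵢ − (1/2)‖RᵀXᵀYα‖₂²`. -/
noncomputable def svmDualObjRed {p d r : ℕ} (X : Matrix (Fin p) (Fin d) ℝ)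
    (R : Matrix (Fin d) (Fin r) ℝ) (y : Fin p → ℝ) (α : Fin p → ℝ) : ℝ :=
  ∑ i, α i - (1 / 2) * euclNorm (Rᵀ.mulVec (Xᵀ.mulVec ((Matrix.diagonal y).mulVec α))) ^ 2

lemma euclNorm_sq {n : ℕ} (x : Fin n → ℝ) : euclNorm x ^ 2 = x ⬝ᵥ x := by
  unfold euclNorm
  rw [Real.sq_sqrt (Finset.sum_nonneg fun i _ => sq_nonneg _)]
  simp [dotProduct, sq]

lemma euclNorm_nonneg {n : ℕ} (x : Fin n → ℝ) : 0 ≤ euclNorm x := Real.sqrt_nonneg _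

lemma euclNorm_smul {n : ℕ} (c : ℝ) (hc : 0 ≤ c) (x : Fin n → ℝ) :
    euclNorm (c • x) = c * euclNorm x := by
  unfold euclNorm
  simp only [Pi.smul_apply, smul_eq_mul, mul_pow]
  rw [← Finset.mul_sum, Real.sqrt_mul (sq_nonneg c), Real.sqrt_sq hc]

lemma specNorm_bdd {m n : ℕ} (A : Matrix (Fin m) (Fin n) ℝ) :
    BddAbove {c : ℝ | ∃ x : Fin n → ℝ, euclNorm x = 1 ∧ c = euclNorm (A.mulVec x)} := by
  refine ⟨Real.sqrt (∑ i, ∑ j, A i j ^ 2), ?_⟩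
  rintro c ⟨x, hx, rfl⟩
  apply Real.sqrt_le_sqrt
  apply Finset.sum_le_sum
  intro i _
  have h1 : ∑ j, x j ^ 2 = 1 := by
    have := euclNorm_sq x
    rw [hx] at this
    simp only [dotProduct, ← sq] at this
    linarith
  have := Finset.sum_mul_sq_le_sq_mul_sq Finset.univ (fun j => A i j) x
  rw [h1, mul_one] at this
  exact this

lemma euclNorm_mulVec_le {m n : ℕ} (A : Matrix (Fin m) (Fin n) ℝ) (w : Fin n → ℝ) 
    (hw : 0 < euclNorm w) : euclNorm (A *ᵥ w) ≤ specNorm A * euclNorm w := by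
  have h : euclNorm (A *ᵥ ((euclNorm w)⁻¹ • w)) ≤ specNorm A := by
    apply le_csSup (specNorm_bdd A)
    refine ⟨_, ?_, rfl⟩
    rw [euclNorm_smul _ (inv_nonneg.2 hw.le), inv_mul_cancel₀ hw.ne']
  rw [mulVec_smul, euclNorm_smul _ (inv_nonneg.2 hw.le), inv_mul_le_iff₀ hw] at h
  linarith

lemma dot_mulVec_le {n : ℕ} (A : Matrix (Fin n) (Fin n) ℝ) (w : Fin n → ℝ) :
    w ⬝ᵥ (A *ᵥ w) ≤ specNorm A * (w ⬝ᵥ w) := by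
  rcases (euclNorm_nonneg w).eq_or_lt with h | h
  · have h2 := euclNorm_sq w
    rw [← h] at h2
    have : w = 0 := dotProduct_self_eq_zero.1 (by linarith)
    simp [this]
  · have h1 := euclNorm_mulVec_le A w h
    have h2 : w ⬝ᵥ (A *ᵥ w) ≤ euclNorm w * euclNorm (A *ᵥ w) :=
      Real.sum_mul_le_sqrt_mul_sqrt Finset.univ w (A *ᵥ w)
    rw [← euclNorm_sq]
    nlinarith

/-- **Dual optimum comparison, relative form (eqn. (8) of the paper).** If
`E = I_ρ − VᵀRRᵀV` satisfies `‖E‖₂ < 1`, `α*` maximizes the SVM dual `f` over `K`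
and `α̃*` maximizes the reduced dual `f̃` over `K`, then
`f(α*) ≥ f̃(α̃*) − (1/2)(‖E‖₂/(1 − ‖E‖₂))‖RᵀXᵀYα̃*‖₂²`. -/
theorem svm_dual_optimum_comparison_relative
    (p d r ρ : ℕ)
    (X : Matrix (Fin p) (Fin d) ℝ) (hrank : X.rank = ρ)
    (U : Matrix (Fin p) (Fin ρ) ℝ) (S : Matrix (Fin ρ) (Fin ρ) ℝ)
    (V : Matrix (Fin d) (Fin ρ) ℝ)
    (hU : Uᵀ * U = 1) (hV : Vᵀ * V = 1)
    (hS : ∃ σ : Fin ρ → ℝ, (∀ i, 0 < σ i) ∧ S = Matrix.diagonal σ)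
    (hX : X = U * S * Vᵀ)
    (R : Matrix (Fin d) (Fin r) ℝ)
    (hE : specNorm ((1 : Matrix (Fin ρ) (Fin ρ) ℝ) - Vᵀ * R * Rᵀ * V) < 1)
    (y : Fin p → ℝ) (hy : ∀ i, y i = 1 ∨ y i = -1)
    (C : ℝ) (hC : 0 < C)
    (αs : Fin p → ℝ) (hαs : svmFeasible y C αs)
    (hαsmax : ∀ β, svmFeasible y C β → svmDualObj X y β ≤ svmDualObj X y αs)
    (αt : Fin p → ℝ) (hαt : svmFeasible y C αt)
    (hαtmax : ∀ β, svmFeasible y C β → svmDualObjRed X R y β ≤ svmDualObjRed X R y αt) :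
    svmDualObj X y αs
      ≥ svmDualObjRed X R y αt
        - (1 / 2)
          * (specNorm ((1 : Matrix (Fin ρ) (Fin ρ) ℝ) - Vᵀ * R * Rᵀ * V)
              / (1 - specNorm ((1 : Matrix (Fin ρ) (Fin ρ) ℝ) - Vᵀ * R * Rᵀ * V)))
          * euclNorm (Rᵀ.mulVec (Xᵀ.mulVec ((Matrix.diagonal y).mulVec αt))) ^ 2 := by
  have hmax := hαsmax αt hαt
  unfold svmDualObjRed
  unfold svmDualObj at hmax ⊢
  obtain ⟨w, hw⟩ : ∃ w, Xᵀ *ᵥ ((Matrix.diagonal y) *ᵥ αt) = V *ᵥ w := by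
    refine ⟨(U * S)ᵀ *ᵥ ((Matrix.diagonal y) *ᵥ αt), ?_⟩
    rw [hX, transpose_mul (U * S), transpose_transpose, ← mulVec_mulVec]
  rw [hw] at hmax ⊢
  have h1 : euclNorm (V *ᵥ w) ^ 2 = w ⬝ᵥ w := by
    rw [euclNorm_sq, dotProduct_mulVec, vecMul_mulVec, hV, dotProduct_comm]
    simp
  have h2 : euclNorm (Rᵀ *ᵥ (V *ᵥ w)) ^ 2
      = w ⬝ᵥ w - w ⬝ᵥ ((1 - Vᵀ * R * Rᵀ * V) *ᵥ w) := by
    rw [euclNorm_sq, sub_mulVec, one_mulVec, dotProduct_sub, sub_sub_cancel, mulVec_mulVec]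
    rw [dotProduct_comm, ← dotProduct_transpose_mulVec, mulVec_mulVec]
    simp [Matrix.mul_assoc]
  have h3 := dot_mulVec_le (1 - Vᵀ * R * Rᵀ * V) w
  generalize specNorm (1 - Vᵀ * R * Rᵀ * V) = e at *
  rw [h1] at hmax
  generalize euclNorm (Rᵀ *ᵥ (V *ᵥ w)) ^ 2 = q at *
  have h4 : w ⬝ᵥ w ≤ q / (1 - e) := by
    rw [le_div_iff₀ (by linarith)]; linarith
  have h5 : e / (1 - e) * q = q / (1 - e) - q := by
    have : 1 - e ≠ 0 := by linarith
    field_simp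
    ring
  rw [mul_assoc, h5]
  linarith
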